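/- Let ℓ : ⟨Π_ℚ⟩ → ℝ be a Wiener-L¹-continuous linear functional and let ℓ̄ : ⟨Π_ℝ⟩ → ℝ be its unique Wiener-L¹-continuous linear extension. If f(b) ∈ ⟨Π_ℚ⟩ is such that ℓ( g(b)² · f(b) ) ≥ 0 for all g(b) ∈ ⟨Π_ℚ⟩, then ℓ̄( g(b)² · f(b) ) ≥ 0 for all g(b) ∈ ⟨Π_ℝ⟩. -/

import Mathlib

open MeasureTheory ProbabilityTheory Filter

/-- A process `b` is a one-dimensional Brownian motion pinned at zero (on the time
interval `[0,1]`) under the measure `W`. -/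
def IsBrownianMotion {Ω : Type*} [MeasurableSpace Ω] (W : Measure Ω) (b : ℝ → Ω → ℝ) : Prop :=
  (∀ t : ℝ, Measurable (b t)) ∧
  (∀ ω : Ω, ContinuousOn (fun t => b t ω) (Set.Icc (0:ℝ) 1)) ∧
  (∀ ω : Ω, b 0 ω = 0) ∧
  (∀ s t : ℝ, 0 ≤ s → s ≤ t → t ≤ 1 →
    W.map (fun ω => b t ω - b s ω) = gaussianReal 0 (Real.toNNReal (t - s))) ∧
  (∀ (n : ℕ) (ts : Fin (n + 1) → ℝ), Monotone ts → (∀ i, ts i ∈ Set.Icc (0:ℝ) 1) →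
    iIndepFun
      (fun i : Fin n => fun ω => b (ts i.succ) ω - b (ts i.castSucc) ω) W)

/-- `Π_ℚ`: products `∏_{j=1}^m b_{q_j}^{i_j}` with `q_j ∈ ℚ ∩ (0,1]` and `i_j ≥ 1`. -/
def PiQ {Ω : Type*} (b : ℝ → Ω → ℝ) : Set (Ω → ℝ) :=
  {Y | ∃ (m : ℕ) (i : Fin m → ℕ) (q : Fin m → ℚ),
    (∀ j, 1 ≤ i j) ∧ (∀ j, 0 < q j ∧ q j ≤ 1) ∧
    Y = fun ω => ∏ j : Fin m, (b ((q j : ℚ) : ℝ) ω) ^ (i j)}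

/-- `Π_ℝ`: products `∏_{j=1}^m b_{t_j}^{i_j}` with `t_j ∈ (0,1]` and `i_j ≥ 1`. -/
def PiR {Ω : Type*} (b : ℝ → Ω → ℝ) : Set (Ω → ℝ) :=
  {Y | ∃ (m : ℕ) (i : Fin m → ℕ) (t : Fin m → ℝ),
    (∀ j, 1 ≤ i j) ∧ (∀ j, 0 < t j ∧ t j ≤ 1) ∧
    Y = fun ω => ∏ j : Fin m, (b (t j) ω) ^ (i j)}

/-- A linear functional on a subspace of random variables is Wiener-L¹-continuous iff it
is bounded with respect to the L¹(W)-(semi)norm. -/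
def WienerL1Continuous {Ω : Type*} [MeasurableSpace Ω] (W : Measure Ω)
    {V : Submodule ℝ (Ω → ℝ)} (ℓ : V →ₗ[ℝ] ℝ) : Prop :=
  ∃ C : ℝ, ∀ F : V, |ℓ F| ≤ C * ∫ ω, |(F : Ω → ℝ) ω| ∂W

open scoped NNReal ENNReal Topology

theorem PiQ_mul {Ω : Type*} (b : ℝ → Ω → ℝ) {x y : Ω → ℝ} (hx : x ∈ PiQ b) (hy : y ∈ PiQ b) :
    x * y ∈ PiQ b := by
  obtain ⟨m, i, q, hi, hq, rfl⟩ := hx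
  obtain ⟨m', i', q', hi', hq', rfl⟩ := hy
  refine ⟨m + m', Fin.append i i', Fin.append q q', ?_, ?_, ?_⟩
  · intro j
    refine Fin.addCases (fun j => ?_) (fun j => ?_) j
    · simpa using hi j
    · simpa using hi' j
  · intro j
    refine Fin.addCases (fun j => ?_) (fun j => ?_) j
    · simpa using hq j
    · simpa using hq' j
  · funext ω
    simp [Fin.prod_univ_add]

theorem spanQ_mul {Ω : Type*} (b : ℝ → Ω → ℝ) {x y : Ω → ℝ}
    (hx : x ∈ Submodule.span ℝ (PiQ b)) (hy : y ∈ Submodule.span ℝ (PiQ b)) :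
    x * y ∈ Submodule.span ℝ (PiQ b) := by
  have h := Submodule.mul_mem_mul hx hy
  rw [Submodule.span_mul_span] at h
  refine Submodule.span_mono ?_ h
  rintro _ ⟨u, hu, v, hv, rfl⟩
  exact PiQ_mul b hu hv

theorem one_mem_spanQ {Ω : Type*} (b : ℝ → Ω → ℝ) :
    (1 : Ω → ℝ) ∈ Submodule.span ℝ (PiQ b) := by
  refine Submodule.subset_span ⟨0, fun _ => 1, fun _ => 1, by simp, by simp, ?_⟩
  funext ω
  simp

theorem b_mem_spanQ {Ω : Type*} (b : ℝ → Ω → ℝ) (q : ℚ) (h0 : 0 < q) (h1 : q ≤ 1) :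
    b q ∈ Submodule.span ℝ (PiQ b) := by
  refine Submodule.subset_span ⟨1, fun _ => 1, fun _ => q, by simp, by simp [h0, h1], ?_⟩
  funext ω
  simp

theorem spanQ_le {Ω : Type*} (b : ℝ → Ω → ℝ) :
    Submodule.span ℝ (PiQ b) ≤ Submodule.span ℝ (PiR b) := by
  refine Submodule.span_mono ?_
  rintro _ ⟨m, i, q, hi, hq, rfl⟩
  exact ⟨m, i, fun j => (q j : ℝ), hi,
    fun j => ⟨Rat.cast_pos.2 (hq j).1, by simpa using (Rat.cast_le (K := ℝ)).2 (hq j).2⟩, rfl⟩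

/-- Convergence in all `L^p`, `p < ∞`. -/
def ConvLp {Ω : Type*} [MeasurableSpace Ω] (W : Measure Ω) (u : ℕ → Ω → ℝ) (g : Ω → ℝ) : Prop :=
  (∀ n, ∀ p : ℝ≥0, MemLp (u n) p W) ∧ (∀ p : ℝ≥0, MemLp g p W) ∧
  ∀ p : ℝ≥0, 1 ≤ p → Tendsto (fun n => eLpNorm (u n - g) p W) atTop (𝓝 0)

section
variable {Ω : Type*} [MeasurableSpace Ω] {W : Measure Ω}

theorem holder_triple (p : ℝ≥0) :
    ENNReal.HolderTriple ((2 * p : ℝ≥0) : ℝ≥0∞) ((2 * p : ℝ≥0) : ℝ≥0∞) (p : ℝ≥0∞) := by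
  constructor
  rw [← two_mul, ENNReal.coe_mul, ENNReal.mul_inv (by simp) (by simp), ← mul_assoc]
  simp [ENNReal.mul_inv_cancel]

theorem memLp_mul' {f g : Ω → ℝ} (hf : ∀ p : ℝ≥0, MemLp f p W) (hg : ∀ p : ℝ≥0, MemLp g p W)
    (p : ℝ≥0) : MemLp (f * g) p W := by
  have := holder_triple p
  exact (hg (2 * p)).mul (hf (2 * p))

theorem eLpNorm_mul_le' {f g : Ω → ℝ} (hf : ∀ p : ℝ≥0, MemLp f p W)
    (hg : ∀ p : ℝ≥0, MemLp g p W) (p : ℝ≥0) :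
    eLpNorm (f * g) p W ≤ eLpNorm f (2 * p : ℝ≥0) W * eLpNorm g (2 * p : ℝ≥0) W := by
  have := holder_triple p
  have h := eLpNorm_smul_le_mul_eLpNorm (p := ((2 * p : ℝ≥0) : ℝ≥0∞))
    (q := ((2 * p : ℝ≥0) : ℝ≥0∞)) (r := (p : ℝ≥0∞)) (hg (2 * p)).1 (hf (2 * p)).1
  rwa [smul_eq_mul] at h

theorem ConvLp.const {g : Ω → ℝ} (hg : ∀ p : ℝ≥0, MemLp g p W) : ConvLp W (fun _ => g) g :=
  ⟨fun _ => hg, hg, fun p _ => by simp⟩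

theorem ConvLp.add {u v : ℕ → Ω → ℝ} {g h : Ω → ℝ} (hu : ConvLp W u g) (hv : ConvLp W v h) :
    ConvLp W (fun n => u n + v n) (g + h) := by
  refine ⟨fun n p => (hu.1 n p).add (hv.1 n p), fun p => (hu.2.1 p).add (hv.2.1 p), fun p hp => ?_⟩
  have hs := (hu.2.2 p hp).add (hv.2.2 p hp)
  rw [add_zero] at hs
  refine tendsto_of_tendsto_of_tendsto_of_le_of_le tendsto_const_nhds hs (fun _ => zero_le) ?_
  intro n
  have e : u n + v n - (g + h) = (u n - g) + (v n - h) := by ring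
  simp only [e]
  exact eLpNorm_add_le ((hu.1 n p).sub (hu.2.1 p)).1 ((hv.1 n p).sub (hv.2.1 p)).1
    (by exact_mod_cast hp)

theorem ConvLp.mul {u v : ℕ → Ω → ℝ} {g h : Ω → ℝ} (hu : ConvLp W u g) (hv : ConvLp W v h) :
    ConvLp W (fun n => u n * v n) (g * h) := by
  refine ⟨fun n => memLp_mul' (hu.1 n) (hv.1 n), memLp_mul' hu.2.1 hv.2.1, fun p hp => ?_⟩
  have hp2 : 1 ≤ 2 * p := by
    calc (1 : ℝ≥0) ≤ p := hp
      _ ≤ 2 * p := by rw [two_mul]; exact le_self_add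
  have a := hu.2.2 (2 * p) hp2
  have c := hv.2.2 (2 * p) hp2
  have s1 := ENNReal.Tendsto.mul a (Or.inr ENNReal.zero_ne_top) c (Or.inr ENNReal.zero_ne_top)
  have s2 := ENNReal.Tendsto.mul_const (b := eLpNorm h (2 * p : ℝ≥0) W) a
    (Or.inr (hv.2.1 (2 * p)).2.ne)
  have s3 := ENNReal.Tendsto.const_mul (a := eLpNorm g (2 * p : ℝ≥0) W) c
    (Or.inr (hu.2.1 (2 * p)).2.ne)
  have hs := (s1.add s2).add s3
  simp only [mul_zero, zero_mul, add_zero] at hs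
  refine tendsto_of_tendsto_of_tendsto_of_le_of_le tendsto_const_nhds hs (fun _ => zero_le) ?_
  intro n
  have e : u n * v n - g * h = (u n - g) * (v n - h) + (u n - g) * h + g * (v n - h) := by ring
  simp only [e]
  have du : ∀ p : ℝ≥0, MemLp (u n - g) p W := fun p => (hu.1 n p).sub (hu.2.1 p)
  have dv : ∀ p : ℝ≥0, MemLp (v n - h) p W := fun p => (hv.1 n p).sub (hv.2.1 p)
  have m1 := memLp_mul' du dv p
  have m2 := memLp_mul' du hv.2.1 p
  have m3 := memLp_mul' hu.2.1 dv p
  have hp' : (1 : ℝ≥0∞) ≤ p := by exact_mod_cast hp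
  refine (eLpNorm_add_le (m1.add m2).1 m3.1 hp').trans ?_
  refine add_le_add ((eLpNorm_add_le m1.1 m2.1 hp').trans (add_le_add ?_ ?_)) ?_
  · exact eLpNorm_mul_le' du dv p
  · exact eLpNorm_mul_le' du hv.2.1 p
  · exact eLpNorm_mul_le' hu.2.1 dv p

theorem incr_eLpNorm {b : ℝ → Ω → ℝ} (hb : IsBrownianMotion W b) {s t : ℝ} (h0 : 0 ≤ s)
    (hst : s ≤ t) (h1 : t ≤ 1) (p : ℝ≥0) :
    eLpNorm (b t - b s) p W
      = ENNReal.ofReal (Real.sqrt (t - s)) * eLpNorm id p (gaussianReal 0 1) := by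
  have hm : Measurable (fun ω => b t ω - b s ω) := (hb.1 t).sub (hb.1 s)
  have h := hb.2.2.2.1 s t h0 hst h1
  have e1 : eLpNorm (b t - b s) p W
      = eLpNorm id p (W.map (fun ω => b t ω - b s ω)) := by
    rw [eLpNorm_map_measure aestronglyMeasurable_id hm.aemeasurable]
    rfl
  have e2 : gaussianReal 0 (Real.toNNReal (t - s))
      = (gaussianReal 0 1).map (Real.sqrt (t - s) * ·) := by
    rw [gaussianReal_map_const_mul]
    congr 1
    · simp
    · ext
      simp [Real.sq_sqrt (sub_nonneg.2 hst), sub_nonneg.2 hst]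
  rw [e1, h, e2, eLpNorm_map_measure aestronglyMeasurable_id (by fun_prop)]
  have e3 : (id ∘ fun x : ℝ => Real.sqrt (t - s) * x) = Real.sqrt (t - s) • (id : ℝ → ℝ) := by
    funext x; simp
  rw [e3, eLpNorm_const_smul, Real.enorm_eq_ofReal (Real.sqrt_nonneg _)]

theorem b_memLp {b : ℝ → Ω → ℝ} (hb : IsBrownianMotion W b) {t : ℝ} (h0 : 0 ≤ t)
    (h1 : t ≤ 1) (p : ℝ≥0) : MemLp (b t) p W := by
  refine ⟨(hb.1 t).aestronglyMeasurable, ?_⟩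
  have h := incr_eLpNorm hb le_rfl h0 h1 p
  have e : b t - b 0 = b t := by funext ω; simp [hb.2.2.1 ω]
  rw [e] at h
  rw [h]
  exact ENNReal.mul_lt_top ENNReal.ofReal_lt_top (memLp_id_gaussianReal p).2

/-- `g` is a limit in all `L^p` of polynomials at rational times. -/
def Appr (W : Measure Ω) (b : ℝ → Ω → ℝ) (g : Ω → ℝ) : Prop :=
  ∃ u : ℕ → Ω → ℝ, (∀ n, u n ∈ Submodule.span ℝ (PiQ b)) ∧ ConvLp W u g

theorem Appr.mul {b : ℝ → Ω → ℝ} {g h : Ω → ℝ} (hg : Appr W b g) (hh : Appr W b h) :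
    Appr W b (g * h) := by
  obtain ⟨u, hu, cu⟩ := hg
  obtain ⟨v, hv, cv⟩ := hh
  exact ⟨_, fun n => spanQ_mul b (hu n) (hv n), cu.mul cv⟩

theorem Appr.add {b : ℝ → Ω → ℝ} {g h : Ω → ℝ} (hg : Appr W b g) (hh : Appr W b h) :
    Appr W b (g + h) := by
  obtain ⟨u, hu, cu⟩ := hg
  obtain ⟨v, hv, cv⟩ := hh
  exact ⟨_, fun n => Submodule.add_mem _ (hu n) (hv n), cu.add cv⟩

theorem Appr.const [IsProbabilityMeasure W] (b : ℝ → Ω → ℝ) (c : ℝ) :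
    Appr W b (fun _ => c) := by
  refine ⟨fun _ => fun _ => c, fun n => ?_, ConvLp.const fun p => memLp_const c⟩
  have := Submodule.smul_mem _ c (one_mem_spanQ b)
  convert this using 1
  funext ω; simp

theorem Appr.b {b : ℝ → Ω → ℝ} (hb : IsBrownianMotion W b) {t : ℝ} (h0 : 0 < t)
    (h1 : t ≤ 1) : Appr W b (b t) := by
  have hex : ∀ n : ℕ, ∃ q : ℚ, max 0 (t - 1 / ((n : ℝ) + 1)) < q ∧ (q : ℝ) < t := by
    intro n
    refine exists_rat_btwn (max_lt h0 ?_)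
    have : 0 < 1 / ((n : ℝ) + 1) := by positivity
    linarith
  choose q hq1 hq2 using hex
  have q0 : ∀ n, (0 : ℝ) < q n := fun n => (le_max_left _ _).trans_lt (hq1 n)
  have qt : Tendsto (fun n => t - (q n : ℝ)) atTop (𝓝 0) := by
    refine tendsto_of_tendsto_of_tendsto_of_le_of_le tendsto_const_nhds
      tendsto_one_div_add_atTop_nhds_zero_nat (fun n => ?_) (fun n => ?_)
    · exact sub_nonneg.2 (hq2 n).le
    · have := (le_max_right _ _).trans_lt (hq1 n)
      show t - (q n : ℝ) ≤ 1 / ((n : ℝ) + 1)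
      linarith
  refine ⟨fun n => b (q n), fun n => b_mem_spanQ b (q n) (by exact_mod_cast q0 n)
    (by exact_mod_cast (hq2 n).le.trans h1), fun n => b_memLp hb (q0 n).le ((hq2 n).le.trans h1),
    b_memLp hb h0.le h1, fun p _ => ?_⟩
  have e : ∀ n, eLpNorm (b (q n) - b t) p W
      = ENNReal.ofReal (Real.sqrt (t - q n)) * eLpNorm id p (gaussianReal 0 1) := by
    intro n
    rw [eLpNorm_sub_comm]
    exact incr_eLpNorm hb (q0 n).le (hq2 n).le h1 p
  simp only [e]
  have hs : Tendsto (fun n => ENNReal.ofReal (Real.sqrt (t - q n))) atTop (𝓝 0) := by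
    have h := ENNReal.tendsto_ofReal ((Real.continuous_sqrt.tendsto 0).comp qt)
    simpa using h
  have := ENNReal.Tendsto.mul_const (b := eLpNorm id p (gaussianReal 0 1)) hs
    (Or.inr (memLp_id_gaussianReal p).2.ne)
  simpa using this

theorem Appr.of_span [IsProbabilityMeasure W] {b : ℝ → Ω → ℝ} (hb : IsBrownianMotion W b)
    {g : Ω → ℝ} (hg : g ∈ Submodule.span ℝ (PiR b)) : Appr W b g := by
  induction hg using Submodule.span_induction with
  | mem x hx =>
    obtain ⟨m, i, t, _, ht, rfl⟩ := hx
    have e : (fun ω => ∏ j : Fin m, (b (t j) ω) ^ (i j)) = ∏ j : Fin m, (b (t j)) ^ (i j) := by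
      funext ω; simp
    rw [e]
    refine Finset.prod_induction _ (Appr W b) (fun _ _ => Appr.mul) (Appr.const b 1) ?_
    intro j _
    induction i j with
    | zero => rw [pow_zero]; exact Appr.const b 1
    | succ k ih => rw [pow_succ]; exact ih.mul (Appr.b hb (ht j).1 (ht j).2)
  | zero => exact Appr.const b 0
  | add x y _ _ hx hy => exact hx.add hy
  | smul c x _ hx => exact (Appr.const b c).mul hx

end

theorem positivity_extends_to_real_times
    {Ω : Type*} [MeasurableSpace Ω] (W : Measure Ω) [IsProbabilityMeasure W]
    (b : ℝ → Ω → ℝ) (hb : IsBrownianMotion W b)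
    (ℓ : Submodule.span ℝ (PiQ b) →ₗ[ℝ] ℝ) (hℓ : WienerL1Continuous W ℓ)
    -- ℓbar is the (unique) Wiener-L¹-continuous extension of ℓ to ⟨Π_ℝ⟩
    (ℓbar : Submodule.span ℝ (PiR b) →ₗ[ℝ] ℝ) (hℓbar : WienerL1Continuous W ℓbar)
    (hext : ∀ (F : Ω → ℝ) (hFQ : F ∈ Submodule.span ℝ (PiQ b))
      (hFR : F ∈ Submodule.span ℝ (PiR b)), ℓbar ⟨F, hFR⟩ = ℓ ⟨F, hFQ⟩)
    -- f(b) ∈ ⟨Π_ℚ⟩ with ℓ(g(b)² f(b)) ≥ 0 for all g(b) ∈ ⟨Π_ℚ⟩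
    (f : Ω → ℝ) (hf : f ∈ Submodule.span ℝ (PiQ b))
    (hpos : ∀ (g : Ω → ℝ), g ∈ Submodule.span ℝ (PiQ b) →
      ∀ hm : g ^ 2 * f ∈ Submodule.span ℝ (PiQ b), 0 ≤ ℓ ⟨g ^ 2 * f, hm⟩) :
    -- then ℓbar(g(b)² f(b)) ≥ 0 for all g(b) ∈ ⟨Π_ℝ⟩
    ∀ (g : Ω → ℝ), g ∈ Submodule.span ℝ (PiR b) →
      ∀ hm : g ^ 2 * f ∈ Submodule.span ℝ (PiR b), 0 ≤ ℓbar ⟨g ^ 2 * f, hm⟩ := by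
  intro g hg hm
  obtain ⟨u, hu, cu⟩ := Appr.of_span hb hg
  obtain ⟨v, _, cv⟩ := Appr.of_span hb (spanQ_le b hf)
  have hc := (cu.mul cu).mul (ConvLp.const cv.2.1)
  have hmem : ∀ n, u n ^ 2 * f ∈ Submodule.span ℝ (PiQ b) := fun n => by
    rw [pow_two]; exact spanQ_mul b (spanQ_mul b (hu n) (hu n)) hf
  have h0 : ∀ n, 0 ≤ ℓbar ⟨u n ^ 2 * f, spanQ_le b (hmem n)⟩ := fun n => by
    rw [hext _ (hmem n)]; exact hpos _ (hu n) _
  obtain ⟨C, hC⟩ := hℓbar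
  have hlim := (ENNReal.tendsto_toReal ENNReal.zero_ne_top).comp (hc.2.2 1 le_rfl)
  have hlim2 := hlim.const_mul C
  have hbd : ∀ n, -ℓbar ⟨g ^ 2 * f, hm⟩
      ≤ C * (eLpNorm (u n * u n * f - g * g * f) ((1 : ℝ≥0) : ℝ≥0∞) W).toReal := by
    intro n
    have h := hC (⟨u n ^ 2 * f, spanQ_le b (hmem n)⟩ - ⟨g ^ 2 * f, hm⟩)
    have hi : ∫ ω, |(u n * u n * f - g * g * f) ω| ∂W
        = (eLpNorm (u n * u n * f - g * g * f) ((1 : ℝ≥0) : ℝ≥0∞) W).toReal := by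
      rw [ENNReal.coe_one, eLpNorm_one_eq_lintegral_enorm]
      exact integral_norm_eq_lintegral_enorm ((hc.1 n 1).sub (hc.2.1 1)).1
    rw [← hi]
    rw [map_sub] at h
    have h2 := (le_abs_self _).trans h
    have h3 := h0 n
    simp only [pow_two] at h2 h3 ⊢
    refine le_trans ?_ h2
    linarith
  have := ge_of_tendsto' hlim2 hbd
  simp only [ENNReal.toReal_zero, mul_zero] at this
  linarith
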